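/- For a Lipschitz spinor κ = (ξ,η) with |κ|^2 = |ξ|^2 + |η|^2, the matrix A_κ = [[ξ, −η'/|κ|^2],[η, ξ'/|κ|^2]] is an element of SL(2, $Γ_{n+1}); in particular its pseudo-determinant ξ^*(ξ'/|κ|^2) + η^*(η'/|κ|^2) equals 1. -/

import Mathlib

open CliffordAlgebra

noncomputable section

namespace PaperCliff

noncomputable instance : Invertible (2 : ℝ) := invertibleOfNonzero two_ne_zero

/-- The quadratic form on `ℝ^{p,q}`: `p` generators of square `+1`, `q` of square `-1`. -/
def sigQ (p q : ℕ) : QuadraticForm ℝ (Fin (p + q) → ℝ) :=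
  QuadraticMap.weightedSumSquares ℝ
    (fun i : Fin (p + q) => if (i : ℕ) < p then (1 : ℝ) else -1)

/-- The negative-definite quadratic form for `Cl(0,n)`. -/
def negQ (n : ℕ) : QuadraticForm ℝ (Fin n → ℝ) :=
  QuadraticMap.weightedSumSquares ℝ (fun _ : Fin n => (-1 : ℝ))

variable {M : Type*} [AddCommGroup M] [Module ℝ M]

/-- Clifford conjugation: composite of the grade involution and reversal. -/
def cconj {Q : QuadraticForm ℝ M} (x : CliffordAlgebra Q) : CliffordAlgebra Q :=
  reverse (involute x)

/-- The paravectors `ℝ ⊕ ℝ^{p,q}` inside the Clifford algebra. -/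
def paravec (Q : QuadraticForm ℝ M) : Submodule ℝ (CliffordAlgebra Q) :=
  LinearMap.range (Algebra.linearMap ℝ (CliffordAlgebra Q)) ⊔ LinearMap.range (ι Q)

/-- The real (degree-zero) component of an element of the Clifford algebra,
via the canonical linear isomorphism with the exterior algebra. -/
def clRe {Q : QuadraticForm ℝ M} (x : CliffordAlgebra Q) : ℝ :=
  ExteriorAlgebra.algebraMapInv (CliffordAlgebra.equivExterior Q x)

/-- The reduced basis monomial `i_{j₁} ⋯ i_{j_k}` for a finite set of indices (in
increasing order). -/
def mono {m : ℕ} (Q : QuadraticForm ℝ (Fin m → ℝ)) (s : Finset (Fin m)) :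
    CliffordAlgebra Q :=
  ((s.sort (· ≤ ·)).map fun j => ι Q (Pi.single j 1)).prod

/-- The (paravector) Lipschitz group, as a subgroup of the units: the group generated by
invertible paravectors. -/
def lipUnits (Q : QuadraticForm ℝ M) : Subgroup (CliffordAlgebra Q)ˣ :=
  Subgroup.closure {u : (CliffordAlgebra Q)ˣ | (u : CliffordAlgebra Q) ∈ paravec Q}

/-- The underlying set of the paravector Lipschitz group `$Γ`. -/
def lipGrp (Q : QuadraticForm ℝ M) : Set (CliffordAlgebra Q) :=
  {x | ∃ u ∈ lipUnits Q, (u : CliffordAlgebra Q) = x}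

/-- The Lipschitz monoid `$Γ^▷ = $Γ ∪ {0}`. -/
def lipMon (Q : QuadraticForm ℝ M) : Set (CliffordAlgebra Q) :=
  insert 0 (lipGrp Q)

/-- A Lipschitz spinor: a pair of elements of the Lipschitz monoid, not both zero,
with `ξ ⬝ conj η` a paravector. -/
def IsSpinor (Q : QuadraticForm ℝ M) (ξ η : CliffordAlgebra Q) : Prop :=
  ξ ∈ lipMon Q ∧ η ∈ lipMon Q ∧ ¬(ξ = 0 ∧ η = 0) ∧ ξ * cconj η ∈ paravec Q

/-- Membership in `SL(2, $Γ)`: entries in the Lipschitz monoid, pseudo-determinant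
`a^* d - c^* b = 1`, and `a b^*, c d^*, c^* a, d^* b` paravectors. -/
def IsSL2 (Q : QuadraticForm ℝ M) (a b c d : CliffordAlgebra Q) : Prop :=
  a ∈ lipMon Q ∧ b ∈ lipMon Q ∧ c ∈ lipMon Q ∧ d ∈ lipMon Q ∧
    reverse a * d - reverse c * b = 1 ∧
    a * reverse b ∈ paravec Q ∧ c * reverse d ∈ paravec Q ∧
    reverse c * a ∈ paravec Q ∧ reverse d * b ∈ paravec Q

lemma negQ_ι_sq (n : ℕ) (v : Fin n → ℝ) : ∃ s : ℝ, 0 ≤ s ∧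
    ι (negQ n) v * ι (negQ n) v = algebraMap ℝ _ (-s) := by
  refine ⟨∑ i, v i * v i, Finset.sum_nonneg fun i _ => mul_self_nonneg _, ?_⟩
  rw [ι_sq_scalar]
  congr 1
  simp [negQ, QuadraticMap.weightedSumSquares_apply]

lemma clRe_algebraMap {Q : QuadraticForm ℝ M} (r : ℝ) :
    clRe (algebraMap ℝ (CliffordAlgebra Q) r) = r := by
  unfold clRe
  simp [CliffordAlgebra.equivExterior, changeForm_algebraMap, ExteriorAlgebra.algebraMapInv]

lemma mem_paravec {Q : QuadraticForm ℝ M} {x : CliffordAlgebra Q} :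
    x ∈ paravec Q ↔ ∃ (a : ℝ) (v : M), x = algebraMap ℝ _ a + ι Q v := by
  unfold paravec
  rw [Submodule.mem_sup]
  constructor
  · rintro ⟨_, ⟨a, rfl⟩, _, ⟨v, rfl⟩, rfl⟩
    exact ⟨a, v, rfl⟩
  · rintro ⟨a, v, rfl⟩
    exact ⟨_, ⟨a, rfl⟩, _, ⟨v, rfl⟩, rfl⟩

lemma cconj_mul {Q : QuadraticForm ℝ M} (x y : CliffordAlgebra Q) :
    cconj (x * y) = cconj y * cconj x := by simp [cconj]

lemma cconj_cconj {Q : QuadraticForm ℝ M} (x : CliffordAlgebra Q) :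
    cconj (cconj x) = x := by simp [cconj, reverse_involute]

lemma cconj_algebraMap {Q : QuadraticForm ℝ M} (r : ℝ) :
    cconj (algebraMap ℝ (CliffordAlgebra Q) r) = algebraMap ℝ _ r := by
  simp [cconj, reverse.commutes]

lemma reverse_para {Q : QuadraticForm ℝ M} {x : CliffordAlgebra Q} (h : x ∈ paravec Q) :
    reverse x = x := by
  obtain ⟨a, v, rfl⟩ := mem_paravec.1 h
  simp [reverse.commutes]

lemma involute_para {Q : QuadraticForm ℝ M} {x : CliffordAlgebra Q} (h : x ∈ paravec Q) :
    involute x ∈ paravec Q := by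
  obtain ⟨a, v, rfl⟩ := mem_paravec.1 h
  exact mem_paravec.2 ⟨a, -v, by simp⟩

lemma cconj_para {Q : QuadraticForm ℝ M} {x : CliffordAlgebra Q} (h : x ∈ paravec Q) :
    cconj x ∈ paravec Q := by
  unfold cconj
  rw [reverse_para (involute_para h)]; exact involute_para h

lemma algebraMap_para {Q : QuadraticForm ℝ M} (r : ℝ) :
    algebraMap ℝ (CliffordAlgebra Q) r ∈ paravec Q :=
  mem_paravec.2 ⟨r, 0, by simp⟩

lemma norm_para (n : ℕ) {x : CliffordAlgebra (negQ n)} (h : x ∈ paravec (negQ n)) :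
    ∃ r : ℝ, 0 ≤ r ∧ x * cconj x = algebraMap ℝ _ r ∧ cconj x * x = algebraMap ℝ _ r := by
  obtain ⟨a, v, rfl⟩ := mem_paravec.1 h
  obtain ⟨s, hs, e⟩ := negQ_ι_sq n v
  have c : cconj (algebraMap ℝ (CliffordAlgebra (negQ n)) a + ι (negQ n) v)
      = algebraMap ℝ _ a - ι (negQ n) v := by
    simp [cconj, reverse.commutes, sub_eq_add_neg]
  have hc := Algebra.commutes a (ι (negQ n) v)
  refine ⟨a * a + s, add_nonneg (mul_self_nonneg a) hs, ?_, ?_⟩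
  · rw [c, add_mul, mul_sub, mul_sub, e, hc]; simp; abel
  · rw [c, sub_mul, mul_add, mul_add, e, hc]; simp; abel

lemma polar_para (n : ℕ) {x y : CliffordAlgebra (negQ n)} (hx : x ∈ paravec (negQ n))
    (hy : y ∈ paravec (negQ n)) :
    ∃ r : ℝ, x * cconj y + y * cconj x = algebraMap ℝ _ r := by
  obtain ⟨r, -, h1, -⟩ := norm_para n hx
  obtain ⟨s, -, h2, -⟩ := norm_para n hy
  obtain ⟨t, -, h3, -⟩ := norm_para n (Submodule.add_mem _ hx hy)
  refine ⟨t - r - s, ?_⟩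
  have hadd : cconj (x + y) = cconj x + cconj y := by simp [cconj]
  rw [map_sub, map_sub, ← h1, ← h2, ← h3, hadd]
  noncomm_ring

lemma sandwich_para (n : ℕ) {x p : CliffordAlgebra (negQ n)} (hx : x ∈ paravec (negQ n))
    (hp : p ∈ paravec (negQ n)) : x * p * x ∈ paravec (negQ n) := by
  obtain ⟨r, -, h1, h2⟩ := norm_para n hx
  obtain ⟨b, hb⟩ := polar_para n hx (cconj_para hp)
  rw [cconj_cconj] at hb
  have e : x * p * x = b • x - r • cconj p := by
    rw [eq_sub_of_add_eq hb, sub_mul, mul_assoc (cconj p), h2, ← Algebra.smul_def,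
      ← Algebra.commutes r, ← Algebra.smul_def]
  rw [e]
  exact Submodule.sub_mem _ (Submodule.smul_mem _ _ hx) (Submodule.smul_mem _ _ (cconj_para hp))

/-- the properties of Lipschitz group elements that we use -/
def Good (n : ℕ) (u : CliffordAlgebra (negQ n)) : Prop :=
  (∃ r : ℝ, 0 < r ∧ u * cconj u = algebraMap ℝ _ r ∧ cconj u * u = algebraMap ℝ _ r) ∧
  ∀ p ∈ paravec (negQ n), reverse u * p * u ∈ paravec (negQ n)

lemma good_para (n : ℕ) (u : (CliffordAlgebra (negQ n))ˣ)
    (hu : (u : CliffordAlgebra (negQ n)) ∈ paravec (negQ n)) : Good n u := by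
  refine ⟨?_, fun p hp => ?_⟩
  · obtain ⟨r, h0, h1, h2⟩ := norm_para n hu
    refine ⟨r, lt_of_le_of_ne h0 ?_, h1, h2⟩
    rintro rfl
    rw [map_zero, Units.mul_right_eq_zero] at h1
    have : (u : CliffordAlgebra (negQ n)) = 0 := by
      rw [← cconj_cconj (u : CliffordAlgebra (negQ n)), h1]; simp [cconj]
    exact u.ne_zero this
  · rw [reverse_para hu]; exact sandwich_para n hu hp

lemma inv_para (n : ℕ) (u : (CliffordAlgebra (negQ n))ˣ)
    (hu : (u : CliffordAlgebra (negQ n)) ∈ paravec (negQ n)) :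
    ((u⁻¹ : (CliffordAlgebra (negQ n))ˣ) : CliffordAlgebra (negQ n)) ∈ paravec (negQ n) := by
  obtain ⟨⟨r, h0, h1, h2⟩, -⟩ := good_para n u hu
  have : ((u⁻¹ : (CliffordAlgebra (negQ n))ˣ) : CliffordAlgebra (negQ n)) = r⁻¹ • cconj ↑u := by
    rw [Units.inv_eq_of_mul_eq_one_right]
    rw [mul_smul_comm, h1, Algebra.smul_def, ← map_mul, inv_mul_cancel₀ h0.ne', map_one]
  rw [this]
  exact Submodule.smul_mem _ _ (cconj_para hu)

lemma good_mul (n : ℕ) {u v : CliffordAlgebra (negQ n)} (hu : Good n u) (hv : Good n v) :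
    Good n (u * v) := by
  obtain ⟨⟨r, h0, h1, h2⟩, h3⟩ := hu
  obtain ⟨⟨s, g0, g1, g2⟩, g3⟩ := hv
  refine ⟨⟨r * s, by positivity, ?_, ?_⟩, fun p hp => ?_⟩
  · rw [cconj_mul, mul_assoc, ← mul_assoc v, g1, Algebra.commutes s, ← mul_assoc, h1, map_mul]
  · rw [cconj_mul, mul_assoc, ← mul_assoc _ u, h2, Algebra.commutes r, ← mul_assoc, g2,
      ← map_mul, mul_comm, map_mul]
  · have := g3 _ (h3 p hp)
    simpa [mul_assoc] using this

lemma good_lip (n : ℕ) {x : CliffordAlgebra (negQ n)} (hx : x ∈ lipGrp (negQ n)) : Good n x := by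
  obtain ⟨u, hu, rfl⟩ := hx
  induction hu using Subgroup.closure_induction'' with
  | mem x hx => exact good_para n x hx
  | inv_mem x hx => exact good_para n _ (inv_para n x hx)
  | one => exact good_para n 1 (by simpa using algebraMap_para (Q := negQ n) 1)
  | mul x y _ _ h1 h2 => exact good_mul n h1 h2

lemma involute_lip {Q : QuadraticForm ℝ M} {x : CliffordAlgebra Q} (hx : x ∈ lipMon Q) :
    involute x ∈ lipMon Q := by
  rcases hx with rfl | ⟨u, hu, rfl⟩
  · left; simp
  · right
    refine ⟨Units.map (involute (Q := Q)).toMonoidHom u, ?_, rfl⟩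
    have : lipUnits Q ≤ (lipUnits Q).comap (Units.map (involute (Q := Q)).toMonoidHom) := by
      conv_lhs => unfold lipUnits
      rw [Subgroup.closure_le]
      intro v hv
      exact Subgroup.subset_closure (involute_para hv)
    exact this hu

lemma smul_lip {Q : QuadraticForm ℝ M} {x : CliffordAlgebra Q} (hx : x ∈ lipMon Q) (r : ℝ) :
    r • x ∈ lipMon Q := by
  by_cases hr : r = 0
  · left; simp [hr]
  rcases hx with rfl | ⟨u, hu, rfl⟩
  · left; simp
  · right
    refine ⟨Units.map (algebraMap ℝ (CliffordAlgebra Q)).toMonoidHom (Units.mk0 r hr) * u,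
      Subgroup.mul_mem _ (Subgroup.subset_closure (algebraMap_para r)) hu, ?_⟩
    rw [Algebra.smul_def]; rfl

lemma norm_mon (n : ℕ) {x : CliffordAlgebra (negQ n)} (hx : x ∈ lipMon (negQ n)) :
    0 ≤ clRe (x * cconj x) ∧ (x ≠ 0 → 0 < clRe (x * cconj x)) ∧
    reverse x * involute x = algebraMap ℝ _ (clRe (x * cconj x)) := by
  rcases hx with rfl | hx
  · simp [clRe]
  · obtain ⟨⟨r, h0, h1, h2⟩, -⟩ := good_lip n hx
    rw [h1, clRe_algebraMap]
    refine ⟨h0.le, fun _ => h0, ?_⟩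
    have := congrArg involute h2
    simpa [cconj, reverse_involute] using this

lemma rev_mul_para (n : ℕ) {ξ η : CliffordAlgebra (negQ n)} (hη : η ∈ lipMon (negQ n))
    (h : ξ * cconj η ∈ paravec (negQ n)) : reverse η * ξ ∈ paravec (negQ n) := by
  rcases hη with rfl | hη
  · simp
  · obtain ⟨⟨r, h0, h1, h2⟩, h3⟩ := good_lip n hη
    have := Submodule.smul_mem _ r⁻¹ (h3 _ h)
    rwa [mul_assoc, mul_assoc ξ, h2, ← Algebra.commutes, ← Algebra.smul_def, mul_smul_comm,
      smul_smul, inv_mul_cancel₀ h0.ne', one_smul] at this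

/-- For a Lipschitz spinor `κ = (ξ,η)` with `|κ|² = |ξ|² + |η|²`, the
matrix `A_κ = [[ξ, −η'/|κ|²],[η, ξ'/|κ|²]]` lies in `SL(2, $Γ_{n+1})`; in particular its
pseudo-determinant `ξ^*(ξ'/|κ|²) + η^*(η'/|κ|²)` equals `1`. -/
theorem spinor_matrix_in_sl2 (n : ℕ) (ξ η : CliffordAlgebra (negQ n))
    (h : IsSpinor (negQ n) ξ η) :
    IsSL2 (negQ n) ξ ((clRe (ξ * cconj ξ) + clRe (η * cconj η))⁻¹ • (-(involute η)))
      η ((clRe (ξ * cconj ξ) + clRe (η * cconj η))⁻¹ • involute ξ) ∧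
    reverse ξ * ((clRe (ξ * cconj ξ) + clRe (η * cconj η))⁻¹ • involute ξ) +
      reverse η * ((clRe (ξ * cconj ξ) + clRe (η * cconj η))⁻¹ • involute η) = 1 := by
  obtain ⟨hξ, hη, hne, hp⟩ := h
  obtain ⟨a0, a1, a2⟩ := norm_mon n hξ
  obtain ⟨b0, b1, b2⟩ := norm_mon n hη
  have hk : clRe (ξ * cconj ξ) + clRe (η * cconj η) ≠ 0 := by
    by_cases h1 : ξ = 0
    · have := b1 fun h2 => hne ⟨h1, h2⟩
      positivity
    · have := a1 h1
      positivity
  have hdet : reverse ξ * ((clRe (ξ * cconj ξ) + clRe (η * cconj η))⁻¹ • involute ξ) +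
      reverse η * ((clRe (ξ * cconj ξ) + clRe (η * cconj η))⁻¹ • involute η) = 1 := by
    rw [mul_smul_comm, mul_smul_comm, a2, b2, ← smul_add, ← map_add, Algebra.smul_def,
      ← map_mul, inv_mul_cancel₀ hk, map_one]
  have hr := rev_mul_para n hη hp
  refine ⟨⟨hξ, ?_, hη, smul_lip (involute_lip hξ) _, ?_, ?_, ?_, hr, ?_⟩, hdet⟩
  · rw [smul_neg, ← neg_smul]
    exact smul_lip (involute_lip hη) _
  · rw [smul_neg, mul_neg, sub_neg_eq_add]; exact hdet
  · rw [map_smul, map_neg, mul_smul_comm, mul_neg]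
    exact Submodule.smul_mem _ _ (Submodule.neg_mem _ hp)
  · rw [map_smul, mul_smul_comm]
    refine Submodule.smul_mem _ _ ?_
    have := cconj_para hp
    rwa [cconj_mul, cconj_cconj] at this
  · rw [map_smul, smul_mul_smul_comm, mul_neg]
    refine Submodule.smul_mem _ _ (Submodule.neg_mem _ ?_)
    have := cconj_para hr
    simpa [cconj, reverse_involute] using this

end PaperCliff
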